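/- arXiv:2306.14183 — 2 statements merged into one kernel-verified Lean document; each statement's English description precedes it below -/
import Mathlib

section
/- Let F be a complex Hilbert space and let A = (A_t)_{t≥0} be a C₀-semigroup of bounded operators on L²(ℝ₊, F). Then A doubly commutes with the right-shift semigroup S^F (i.e., A_t S_s^F = S_s^F A_t and A_t (S_s^F)* = (S_s^F)* A_t for all s,t ≥ 0) if and only if there exists a C₀-semigroup (B_t)_{t≥0} of bounded operators on F such that for all t ≥ 0 and f ∈ L²(ℝ₊, F), (A_t f)(x) = B_t(f(x)) for a.e. x (i.e., A_t = I ⊗ B_t). In particular, a C₀-semigroup A of normal operators commutes with S^F if and only if A_t = I ⊗ B_t for some C₀-semigroup (B_t)_{t≥0} of normal operators on F. -/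
open MeasureTheory ContinuousLinearMap
open scoped ENNReal NNReal InnerProductSpace ComplexInnerProductSpace

noncomputable section

section SemigroupDefs

variable {G : Type} [NormedAddCommGroup G] [InnerProductSpace ℂ G] [CompleteSpace G]

/-- A (C₀-) strongly continuous one-parameter semigroup of bounded operators. -/
def IsC0Semigroup (V : ℝ≥0 → G →L[ℂ] G) : Prop :=
  V 0 = 1 ∧ (∀ s t : ℝ≥0, V (s + t) = V s ∘L V t) ∧ ∀ x : G, Continuous fun t : ℝ≥0 => V t x

/-- A C₀-semigroup of isometries. -/
def IsIsometrySemigroup (V : ℝ≥0 → G →L[ℂ] G) : Prop :=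
  IsC0Semigroup V ∧ ∀ (t : ℝ≥0) (x : G), ‖V t x‖ = ‖x‖

/-- The closed subspace `L` reduces the semigroup `V`: it is invariant under every `V t`
and every `(V t)*`. -/
def ReducedBy (V : ℝ≥0 → G →L[ℂ] G) (L : Submodule ℂ G) : Prop :=
  (∀ t : ℝ≥0, ∀ x ∈ L, V t x ∈ L) ∧ ∀ t : ℝ≥0, ∀ x ∈ L, adjoint (V t) x ∈ L

/-- `T` restricts to a unitary operator on the subspace `L`. -/
def RestrictsToUnitaryOn (T : G →L[ℂ] G) (L : Submodule ℂ G) : Prop :=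
  (∀ x ∈ L, T x ∈ L) ∧ (∀ x ∈ L, ‖T x‖ = ‖x‖) ∧ ∀ y ∈ L, ∃ x ∈ L, T x = y

/-- Every `V t` restricts to a unitary operator on the subspace `L`. -/
def IsUnitarySemigroupOn (V : ℝ≥0 → G →L[ℂ] G) (L : Submodule ℂ G) : Prop :=
  ∀ t : ℝ≥0, RestrictsToUnitaryOn (V t) L

/-- A unitary C₀-semigroup: every `V t` is a surjective isometry. -/
def IsUnitarySemigroup (V : ℝ≥0 → G →L[ℂ] G) : Prop :=
  IsC0Semigroup V ∧ ∀ t : ℝ≥0, (∀ x : G, ‖V t x‖ = ‖x‖) ∧ Function.Surjective (V t)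

/-- `V` is completely nonunitary on the subspace `K`: there is no nonzero closed subspace
of `K` reducing `V` on which every `V t` restricts to a unitary. -/
def IsCnuOn (V : ℝ≥0 → G →L[ℂ] G) (K : Submodule ℂ G) : Prop :=
  ∀ L : Submodule ℂ G, IsClosed (L : Set G) → L ≤ K → ReducedBy V L →
    IsUnitarySemigroupOn V L → L = ⊥

/-- A completely nonunitary semigroup. -/
def IsCnu (V : ℝ≥0 → G →L[ℂ] G) : Prop := IsCnuOn V ⊤

/-- Two semigroups commute. -/
def SgCommute (V1 V2 : ℝ≥0 → G →L[ℂ] G) : Prop :=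
  ∀ t s : ℝ≥0, V1 t ∘L V2 s = V2 s ∘L V1 t

/-- Two semigroups doubly commute. -/
def SgDoublyCommute (V1 V2 : ℝ≥0 → G →L[ℂ] G) : Prop :=
  SgCommute V1 V2 ∧ ∀ t s : ℝ≥0, V1 t ∘L adjoint (V2 s) = adjoint (V2 s) ∘L V1 t

/-- A completely nonunitary pair of semigroups: no nonzero closed subspace reduces both
semigroups in such a way that both restrict to unitary semigroups. -/
def IsCnuPair (V1 V2 : ℝ≥0 → G →L[ℂ] G) : Prop :=
  ∀ L : Submodule ℂ G, IsClosed (L : Set G) → ReducedBy V1 L → ReducedBy V2 L →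
    IsUnitarySemigroupOn V1 L → IsUnitarySemigroupOn V2 L → L = ⊥

/-- A strongly continuous one-parameter unitary group. -/
def IsUnitaryGroup (U : ℝ → G →L[ℂ] G) : Prop :=
  U 0 = 1 ∧ (∀ s t : ℝ, U (s + t) = U s ∘L U t) ∧
  (∀ (t : ℝ) (x : G), ‖U t x‖ = ‖x‖) ∧ (∀ t : ℝ, Function.Surjective (U t)) ∧
  ∀ x : G, Continuous fun t : ℝ => U t x

/-- Two subspaces are mutually orthogonal. -/
def OrthoSubspaces (A B : Submodule ℂ G) : Prop :=
  ∀ x ∈ A, ∀ y ∈ B, ⟪x, y⟫_ℂ = 0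

end SemigroupDefs

/-- Lebesgue measure restricted to `ℝ₊ = [0, ∞)`; `Lp F 2 rplus` plays the role of
`L²(ℝ₊, F)`. -/
def rplus : Measure ℝ := (volume : Measure ℝ).restrict (Set.Ici 0)

/-- `T` is the right shift by `t` on `L²(ℝ₊, F)`:
`(T f)(x) = f (x - t)` for `x ≥ t` and `(T f)(x) = 0` otherwise. -/
def IsRightShiftOp (F : Type) [NormedAddCommGroup F] [InnerProductSpace ℂ F]
    (t : ℝ) (T : Lp F 2 rplus →L[ℂ] Lp F 2 rplus) : Prop :=
  ∀ f : Lp F 2 rplus,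
    (T f : ℝ → F) =ᵐ[rplus] fun x => if t ≤ x then (f : ℝ → F) (x - t) else 0

section Aux

variable {F : Type} [NormedAddCommGroup F] [InnerProductSpace ℂ F]

lemma rplus_Ico_ne_top (s : ℝ) : rplus (Set.Ico 0 s) ≠ ∞ :=
  ((Measure.restrict_apply_le _ _).trans_lt (by simp)).ne

lemma rplus_real_Ico (s : ℝ≥0) : rplus.real (Set.Ico 0 (s : ℝ)) = s := by
  rw [rplus, measureReal_restrict_apply measurableSet_Ico,
    Set.inter_eq_left.2 (fun x hx => hx.1)]
  simp

lemma rplus_restrict {K : Set ℝ} (hK : MeasurableSet K) :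
    rplus.restrict K = volume.restrict (K ∩ Set.Ici 0) := by
  rw [rplus, Measure.restrict_restrict hK]

def JJ (s : ℝ≥0) (v : F) : Lp F 2 rplus :=
  indicatorConstLp 2 (measurableSet_Ico (a := (0 : ℝ)) (b := (s : ℝ))) (rplus_Ico_ne_top s) v

lemma JJ_coe (s : ℝ≥0) (v : F) :
    (JJ s v : ℝ → F) =ᵐ[rplus] (Set.Ico 0 (s : ℝ)).indicator fun _ => v :=
  indicatorConstLp_coeFn

lemma ae_rplus_nonneg : ∀ᵐ x ∂rplus, 0 ≤ x := by
  rw [rplus]; exact ae_restrict_mem measurableSet_Ici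

lemma mp_sub (s : ℝ≥0) : MeasurePreserving (fun x : ℝ => x - s)
    (rplus.restrict (Set.Ici (s : ℝ))) rplus := by
  have h := (measurePreserving_sub_right (volume : Measure ℝ) (s : ℝ)).restrict_preimage
    (measurableSet_Ici (a := (0 : ℝ)))
  have e : (fun x : ℝ => x - s) ⁻¹' Set.Ici 0 = Set.Ici (s : ℝ) := by ext x; simp
  rw [e] at h
  have e2 : rplus.restrict (Set.Ici (s : ℝ)) = volume.restrict (Set.Ici (s : ℝ)) := by
    rw [rplus, Measure.restrict_restrict measurableSet_Ici, Set.inter_eq_left.2]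
    intro x hx
    exact le_trans s.2 hx
  rw [e2]; exact h

lemma ae_shift {P : ℝ → Prop} (s : ℝ≥0) (h : ∀ᵐ x ∂rplus, P x) :
    ∀ᵐ x ∂rplus, (s : ℝ) ≤ x → P (x - s) := by
  have := (mp_sub s).quasiMeasurePreserving.ae h
  exact (ae_restrict_iff' measurableSet_Ici).1 this

lemma shift_inner (s : ℝ≥0) {T : Lp F 2 rplus →L[ℂ] Lp F 2 rplus}
    (hT : IsRightShiftOp F (s : ℝ) T) (f g : Lp F 2 rplus) : ⟪T f, T g⟫_ℂ = ⟪f, g⟫_ℂ := by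
  rw [L2.inner_def, L2.inner_def]
  have h1 : ∫ x, ⟪(T f : ℝ → F) x, (T g : ℝ → F) x⟫_ℂ ∂rplus =
      ∫ x in Set.Ici (s : ℝ), ⟪(f : ℝ → F) (x - s), (g : ℝ → F) (x - s)⟫_ℂ ∂rplus := by
    rw [← integral_indicator measurableSet_Ici]
    refine integral_congr_ae ?_
    filter_upwards [hT f, hT g] with x h1 h2
    rw [h1, h2]
    by_cases h : (s : ℝ) ≤ x <;> simp [h]
  rw [h1]
  exact (mp_sub s).integral_comp (measurableEmbedding_subRight (s : ℝ))
    (fun x => ⟪(f : ℝ → F) x, (g : ℝ → F) x⟫_ℂ)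

lemma JJ_shift (s t : ℝ≥0) {T : Lp F 2 rplus →L[ℂ] Lp F 2 rplus}
    (hT : IsRightShiftOp F (s : ℝ) T) (v : F) : JJ (s + t) v = JJ s v + T (JJ t v) := by
  apply Lp.ext
  filter_upwards [Lp.coeFn_add (JJ s v) (T (JJ t v)), JJ_coe (s + t) v, JJ_coe s v, hT (JJ t v),
    ae_shift s (JJ_coe t v)] with x h1 h2 h3 h4 h5
  rw [h1, Pi.add_apply, h2, h3, h4]
  have := t.2
  have := s.2
  by_cases h : (s : ℝ) ≤ x
  · rw [if_pos h, h5 h]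
    simp only [Set.indicator, Set.mem_Ico, NNReal.coe_add]
    by_cases h' : x < s + t
    · rw [if_pos ⟨by linarith, h'⟩, if_neg (by intro h; linarith [h.2]),
        if_pos ⟨by linarith, by linarith⟩, zero_add]
    · rw [if_neg (fun h => h' h.2), if_neg (by intro h; linarith [h.2]),
        if_neg (by intro h; exact h' (by linarith [h.2])), zero_add]
  · rw [if_neg h]
    push Not at h
    simp only [Set.indicator, Set.mem_Ico, NNReal.coe_add]
    have : x < s + t := by linarith [t.coe_nonneg]
    simp [h, this]

lemma JJ_orth (s : ℝ≥0) {T : Lp F 2 rplus →L[ℂ] Lp F 2 rplus}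
    (hT : IsRightShiftOp F (s : ℝ) T) (v : F) (f : Lp F 2 rplus) : ⟪JJ s v, T f⟫_ℂ = 0 := by
  rw [L2.inner_def]
  refine integral_eq_zero_of_ae ?_
  filter_upwards [JJ_coe s v, hT f] with x h1 h2
  rw [h1, h2]
  by_cases h : (s : ℝ) ≤ x
  · rw [Set.indicator_of_notMem (by intro h'; exact absurd h'.2 (not_lt.2 h))]; simp
  · simp [h]

lemma JJ_norm_le (s : ℝ≥0) (hs : s ≤ 1) (v : F) : ‖JJ s v‖ ≤ ‖v‖ := by
  refine norm_indicatorConstLp_le.trans ?_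
  rw [rplus_real_Ico]
  refine mul_le_of_le_one_right (norm_nonneg _) ?_
  exact Real.rpow_le_one s.2 hs (by simp)

def J1 : F →L[ℂ] Lp F 2 rplus :=
  LinearMap.mkContinuous
    { toFun := fun v => JJ 1 v
      map_add' := fun v w => indicatorConstLp_add.symm
      map_smul' := fun c v => by
        apply Lp.ext
        filter_upwards [Lp.coeFn_smul c (JJ 1 v), JJ_coe 1 v, JJ_coe 1 (c • v)] with x h1 h2 h3
        rw [RingHom.id_apply, h1, Pi.smul_apply, h2, h3]
        by_cases h : x ∈ Set.Ico (0 : ℝ) ((1 : ℝ≥0) : ℝ) <;> simp [Set.indicator] } 1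
    (fun v => by rw [one_mul]; exact JJ_norm_le 1 le_rfl v)

lemma J1_apply (v : F) : J1 v = JJ 1 v := rfl

lemma comp_JJ (B : F →L[ℂ] F) (s : ℝ≥0) (v : F) :
    B.compLpL 2 rplus (JJ s v) = JJ s (B v) := by
  apply Lp.ext
  filter_upwards [B.coeFn_compLpL (JJ s v), JJ_coe s v, JJ_coe s (B v)] with x h1 h2 h3
  rw [h1, h2, h3]
  by_cases h : x ∈ Set.Ico (0 : ℝ) (s : ℝ)
  · rw [Set.indicator_of_mem h, Set.indicator_of_mem h]
  · rw [Set.indicator_of_notMem h, Set.indicator_of_notMem h, map_zero]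

lemma comp_shift (B : F →L[ℂ] F) (s : ℝ≥0) {T : Lp F 2 rplus →L[ℂ] Lp F 2 rplus}
    (hT : IsRightShiftOp F (s : ℝ) T) :
    B.compLpL 2 rplus ∘L T = T ∘L B.compLpL 2 rplus := by
  ext1 f
  apply Lp.ext
  simp only [ContinuousLinearMap.comp_apply]
  filter_upwards [B.coeFn_compLpL (T f), hT f, hT (B.compLpL 2 rplus f),
    ae_shift s (B.coeFn_compLpL (p := 2) f)] with x h1 h2 h3 h4
  rw [h1, h2, h3]
  by_cases h : (s : ℝ) ≤ x
  · rw [if_pos h, if_pos h, h4 h]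
  · rw [if_neg h, if_neg h, map_zero]

lemma comp_comp (B C : F →L[ℂ] F) :
    (B ∘L C).compLpL 2 rplus = B.compLpL 2 rplus ∘L C.compLpL 2 rplus := by
  ext1 f
  apply Lp.ext
  simp only [ContinuousLinearMap.comp_apply]
  filter_upwards [B.coeFn_compLpL (C.compLpL 2 rplus f), C.coeFn_compLpL (p := 2) f,
    (B ∘L C).coeFn_compLpL f] with x h1 h2 h3
  rw [h1, h2, h3, ContinuousLinearMap.comp_apply]

lemma comp_one : (1 : F →L[ℂ] F).compLpL 2 rplus = 1 := by
  ext1 f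
  apply Lp.ext
  filter_upwards [(1 : F →L[ℂ] F).coeFn_compLpL f] with x h1
  rw [h1]; rfl

variable [CompleteSpace F]

lemma comp_adjoint (B : F →L[ℂ] F) :
    adjoint (B.compLpL 2 rplus) = (adjoint B).compLpL 2 rplus := by
  symm
  rw [ContinuousLinearMap.eq_adjoint_iff]
  intro f g
  rw [L2.inner_def, L2.inner_def]
  refine integral_congr_ae ?_
  filter_upwards [B.coeFn_compLpL g, (adjoint B).coeFn_compLpL f] with x h1 h2
  rw [h1, h2, adjoint_inner_left]

lemma JJ_inner (s t : ℝ≥0) (v w : F) :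
    ⟪JJ s v, JJ t w⟫_ℂ = ((min s t : ℝ≥0) : ℂ) * ⟪v, w⟫_ℂ := by
  unfold JJ
  rw [L2.inner_indicatorConstLp_indicatorConstLp measurableSet_Ico measurableSet_Ico
    (rplus_Ico_ne_top s) (rplus_Ico_ne_top t), Set.Ico_inter_Ico]
  have : Set.Ico (max (0 : ℝ) 0) (min (s : ℝ) t) = Set.Ico 0 ((min s t : ℝ≥0) : ℝ) := by simp
  rw [this, rplus_real_Ico]
  simp

lemma JJ_injective {v w : F} (h : JJ 1 v = JJ 1 w) : v = w := by
  refine ext_inner_left ℂ fun u => ?_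
  have := congrArg (fun z => ⟪JJ 1 u, z⟫_ℂ) h
  simpa [JJ_inner] using this

lemma comp_injective {B C : F →L[ℂ] F} (h : B.compLpL 2 rplus = C.compLpL 2 rplus) : B = C := by
  ext1 v
  apply JJ_injective
  rw [← comp_JJ, ← comp_JJ, h]

lemma eq_zero_of_orth (f : Lp F 2 rplus) (h : ∀ (s : ℝ≥0) (v : F), ⟪JJ s v, f⟫_ℂ = 0) :
    f = 0 := by
  let _ : InnerProductSpace ℝ F := InnerProductSpace.rclikeToReal ℂ F
  have h0 : ∀ s : ℝ, 0 ≤ s → ∫ x in Set.Ico 0 s, (f : ℝ → F) x ∂rplus = 0 := by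
    intro s hs
    refine ext_inner_left ℂ fun v => ?_
    have := h ⟨s, hs⟩ v
    unfold JJ at this
    rw [L2.inner_indicatorConstLp_eq_inner_setIntegral] at this
    rw [inner_zero_right]; exact this
  set g : ℝ → F := (Set.Ici (0 : ℝ)).indicator f with hg
  have hloc : LocallyIntegrable g volume := by
    rw [locallyIntegrable_iff]
    intro K hK
    have hr : rplus K ≠ ∞ := ((Measure.restrict_apply_le _ _).trans_lt hK.measure_lt_top).ne
    have h1 : IntegrableOn f K rplus :=
      integrableOn_Lp_of_measure_ne_top f fact_one_le_two_ennreal.elim hr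
    rw [IntegrableOn, hg, integrable_indicator_iff measurableSet_Ici, IntegrableOn,
      Measure.restrict_restrict measurableSet_Ici]
    rw [IntegrableOn, rplus_restrict hK.measurableSet, Set.inter_comm] at h1
    exact h1
  have hint : ∀ x : ℝ, ∫ y in (0 : ℝ)..x, g y = 0 := by
    intro x
    rcases le_total 0 x with hx | hx
    · rw [intervalIntegral.integral_of_le hx, ← integral_Ico_eq_integral_Ioc, hg,
        setIntegral_indicator measurableSet_Ici, ← h0 x hx,
        rplus_restrict measurableSet_Ico]
    · rw [intervalIntegral.integral_of_ge hx, ← integral_Ico_eq_integral_Ioc,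
        setIntegral_eq_zero_of_forall_eq_zero, neg_zero]
      intro y hy
      exact Set.indicator_of_notMem (by simpa using hy.2) _
  have hae : ∀ᵐ x, g x = 0 := by
    filter_upwards [LocallyIntegrable.ae_hasDerivAt_integral hloc] with x hx
    have h1 := hx 0
    simp only [hint] at h1
    exact h1.unique (hasDerivAt_const x (0 : F))
  apply Lp.ext
  have h2 : ∀ᵐ x ∂rplus, g x = 0 := by rw [rplus]; exact ae_restrict_of_ae hae
  filter_upwards [h2, ae_rplus_nonneg, Lp.coeFn_zero F 2 rplus] with x h1 h2 h3
  rw [h3, Pi.zero_apply, ← h1, hg, Set.indicator_of_mem (Set.mem_Ici.2 h2)]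

lemma additive_linear (h : ℝ≥0 → ℂ) (hadd : ∀ s t, h (s + t) = h s + h t) (C : ℝ)
    (hb : ∀ t ≤ 1, ‖h t‖ ≤ C) (t : ℝ≥0) : h t = (t : ℂ) * h 1 := by
  have h00 : h 0 = 0 := by simpa using hadd 0 0
  have hn : ∀ (n : ℕ) (t : ℝ≥0), h (n * t) = n * h t := by
    intro n t
    induction n with
    | zero => simp [h00]
    | succ k ih => push_cast; rw [add_mul, one_mul, hadd, ih]; ring
  have key : ∀ n : ℕ, n * ‖h t - t * h 1‖ ≤ 2 * C := by
    intro n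
    set m := ⌊(n : ℝ≥0) * t⌋₊
    have hm : (m : ℝ≥0) ≤ n * t := Nat.floor_le (zero_le)
    obtain ⟨r, hr⟩ := exists_add_of_le hm
    have hr1 : r ≤ 1 := by
      have := (Nat.lt_floor_add_one ((n : ℝ≥0) * t)).le
      change (n : ℝ≥0) * t ≤ m + 1 at this
      rw [hr] at this
      exact le_of_add_le_add_left this
    have e1 : (n : ℂ) * h t = m * h 1 + h r := by
      rw [← hn, hr, hadd, ← hn m 1, mul_one]
    have e2 : (n : ℂ) * t = m + r := by exact_mod_cast congrArg (fun x : ℝ≥0 => ((x : ℝ) : ℂ)) hr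
    have e3 : (n : ℂ) * (h t - t * h 1) = h r - r * h 1 := by
      rw [mul_sub, e1, ← mul_assoc, e2]; ring
    have e4 : (n : ℝ) * ‖h t - t * h 1‖ = ‖h r - r * h 1‖ := by
      rw [← e3, norm_mul, Complex.norm_natCast]
    rw [e4]
    refine (norm_sub_le _ _).trans ?_
    have h1 := hb r hr1
    have h2 := hb 1 le_rfl
    have h3 : ‖(r : ℂ) * h 1‖ ≤ ‖h 1‖ := by
      rw [norm_mul]
      refine mul_le_of_le_one_left (norm_nonneg _) ?_
      have : ‖((r : ℝ) : ℂ)‖ ≤ 1 := by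
        rw [Complex.norm_real, Real.norm_of_nonneg r.coe_nonneg]; exact hr1
      exact this
    linarith
  by_contra hne
  have hpos : 0 < ‖h t - t * h 1‖ := norm_pos_iff.2 (sub_ne_zero.2 hne)
  obtain ⟨n, hn'⟩ := exists_nat_gt (2 * C / ‖h t - t * h 1‖)
  rw [div_lt_iff₀ hpos] at hn'
  exact absurd (key n) (not_le.2 hn')

lemma core (S : ℝ≥0 → Lp F 2 rplus →L[ℂ] Lp F 2 rplus)
    (hS : ∀ t : ℝ≥0, IsRightShiftOp F (t : ℝ) (S t)) (T : Lp F 2 rplus →L[ℂ] Lp F 2 rplus)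
    (h1 : ∀ s, T ∘L S s = S s ∘L T) (h2 : ∀ s, T ∘L adjoint (S s) = adjoint (S s) ∘L T) :
    T = (adjoint J1 ∘L T ∘L J1).compLpL 2 rplus := by
  have hz : ∀ (s : ℝ≥0) (v : F), adjoint (S s) (JJ s v) = 0 := by
    intro s v
    refine ext_inner_right ℂ fun f => ?_
    rw [adjoint_inner_left, JJ_orth s (hS s), inner_zero_left]
  have c1 : ∀ s f, T (S s f) = S s (T f) := fun s f => by
    simpa using congrArg (fun L => L f) (h1 s)
  have c2 : ∀ s f, T (adjoint (S s) f) = adjoint (S s) (T f) := fun s f => by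
    simpa using congrArg (fun L => L f) (h2 s)
  have o1 : ∀ s v f, ⟪JJ s v, T (S s f)⟫_ℂ = 0 := fun s v f => by
    rw [c1, JJ_orth s (hS s)]
  have o2 : ∀ s v f, ⟪S s f, T (JJ s v)⟫_ℂ = 0 := fun s v f => by
    rw [← adjoint_inner_right, ← c2, hz, map_zero, inner_zero_right]
  have hlin : ∀ (v e : F) (t : ℝ≥0),
      ⟪JJ t v, T (JJ t e)⟫_ℂ = (t : ℂ) * ⟪JJ 1 v, T (JJ 1 e)⟫_ℂ := by
    intro v e
    refine additive_linear (fun t => ⟪JJ t v, T (JJ t e)⟫_ℂ) ?_ (‖v‖ * (‖T‖ * ‖e‖)) ?_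
    · intro s t
      rw [JJ_shift s t (hS s) v, JJ_shift s t (hS s) e, map_add, inner_add_left, inner_add_right,
        inner_add_right, o1, o2, c1, shift_inner s (hS s)]
      ring
    · intro t ht
      refine (norm_inner_le_norm _ _).trans ?_
      refine mul_le_mul (JJ_norm_le t ht v) ?_ (norm_nonneg _) (norm_nonneg _)
      exact (T.le_opNorm _).trans (mul_le_mul_of_nonneg_left (JJ_norm_le t ht e) (norm_nonneg _))
  set B := adjoint J1 ∘L T ∘L J1 with hB
  have hBi : ∀ v e : F, ⟪v, B e⟫_ℂ = ⟪JJ 1 v, T (JJ 1 e)⟫_ℂ := by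
    intro v e
    rw [hB, ContinuousLinearMap.comp_apply, adjoint_inner_right]; rfl
  have hmin : ∀ s t v e, ⟪JJ s v, T (JJ t e)⟫_ℂ = ((min s t : ℝ≥0) : ℂ) * ⟪v, B e⟫_ℂ := by
    intro s t v e
    rw [hBi]
    rcases le_total s t with h | h
    · obtain ⟨r, rfl⟩ := exists_add_of_le h
      rw [min_eq_left h, ← hlin, JJ_shift s r (hS s) e, map_add, inner_add_right, o1, add_zero]
    · obtain ⟨r, rfl⟩ := exists_add_of_le h
      rw [min_eq_right h, ← hlin, JJ_shift t r (hS t) v, inner_add_left, o2, add_zero]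
  have hJ : ∀ t e, T (JJ t e) = B.compLpL 2 rplus (JJ t e) := by
    intro t e
    rw [← sub_eq_zero]
    refine eq_zero_of_orth _ fun s v => ?_
    rw [inner_sub_right, hmin, comp_JJ, JJ_inner, sub_self]
  set D := T - B.compLpL 2 rplus with hD
  have hD0 : adjoint D = 0 := by
    ext1 f
    refine eq_zero_of_orth _ fun s v => ?_
    rw [adjoint_inner_right, hD, _root_.sub_apply, hJ, sub_self, inner_zero_left]
  have : D = 0 := by
    rw [← adjoint_adjoint D, hD0, map_zero]
  exact sub_eq_zero.1 this

lemma eq_comp_iff (T : Lp F 2 rplus →L[ℂ] Lp F 2 rplus) (B : F →L[ℂ] F) :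
    (∀ f : Lp F 2 rplus, (T f : ℝ → F) =ᵐ[rplus] fun x => B ((f : ℝ → F) x)) ↔
      T = B.compLpL 2 rplus := by
  constructor
  · intro h
    ext1 f
    exact Lp.ext ((h f).trans (B.coeFn_compLpL f).symm)
  · rintro rfl f
    exact B.coeFn_compLpL f

lemma fwd (S : ℝ≥0 → Lp F 2 rplus →L[ℂ] Lp F 2 rplus)
    (hS : ∀ t : ℝ≥0, IsRightShiftOp F (t : ℝ) (S t))
    (A : ℝ≥0 → Lp F 2 rplus →L[ℂ] Lp F 2 rplus) (hA : IsC0Semigroup A)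
    (h1 : ∀ t s : ℝ≥0, A t ∘L S s = S s ∘L A t)
    (h2 : ∀ t s : ℝ≥0, A t ∘L adjoint (S s) = adjoint (S s) ∘L A t) :
    ∃ B : ℝ≥0 → F →L[ℂ] F, IsC0Semigroup B ∧ ∀ t, A t = (B t).compLpL 2 rplus := by
  have hc := fun t => core S hS (A t) (h1 t) (h2 t)
  refine ⟨fun t => adjoint J1 ∘L A t ∘L J1, ⟨?_, ?_, ?_⟩, hc⟩
  · apply comp_injective
    rw [← hc, hA.1, comp_one]
  · intro s t
    apply comp_injective
    rw [comp_comp, ← hc, ← hc, ← hc, hA.2.1]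
  · intro x
    exact (adjoint (J1 (F := F))).continuous.comp (hA.2.2 (J1 x))

end Aux

/-- A C₀-semigroup `A` on `L²(ℝ₊, F)` doubly commutes with the right-shift semigroup iff
`A_t = I ⊗ B_t` for a C₀-semigroup `B` on `F`; in particular a C₀-semigroup of normal
operators commutes with the right-shift semigroup iff it is of this form with each `B_t`
normal. -/
theorem doubly_commuting_with_right_shift (F : Type) [NormedAddCommGroup F]
    [InnerProductSpace ℂ F] [CompleteSpace F]
    (S : ℝ≥0 → Lp F 2 rplus →L[ℂ] Lp F 2 rplus)
    (hS : ∀ t : ℝ≥0, IsRightShiftOp F (t : ℝ) (S t))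
    (A : ℝ≥0 → Lp F 2 rplus →L[ℂ] Lp F 2 rplus) (hA : IsC0Semigroup A) :
    (((∀ t s : ℝ≥0, A t ∘L S s = S s ∘L A t) ∧
        ∀ t s : ℝ≥0, A t ∘L adjoint (S s) = adjoint (S s) ∘L A t) ↔
      ∃ B : ℝ≥0 → F →L[ℂ] F, IsC0Semigroup B ∧
        ∀ (t : ℝ≥0) (f : Lp F 2 rplus),
          (A t f : ℝ → F) =ᵐ[rplus] fun x => B t ((f : ℝ → F) x)) ∧
    ((∀ t : ℝ≥0, A t ∘L adjoint (A t) = adjoint (A t) ∘L A t) →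
      ((∀ t s : ℝ≥0, A t ∘L S s = S s ∘L A t) ↔
        ∃ B : ℝ≥0 → F →L[ℂ] F, IsC0Semigroup B ∧
          (∀ t : ℝ≥0, B t ∘L adjoint (B t) = adjoint (B t) ∘L B t) ∧
          ∀ (t : ℝ≥0) (f : Lp F 2 rplus),
            (A t f : ℝ → F) =ᵐ[rplus] fun x => B t ((f : ℝ → F) x))) := by
  simp only [eq_comp_iff]
  refine ⟨⟨fun h => fwd S hS A hA h.1 h.2, ?_⟩, fun hN => ⟨fun h => ?_, ?_⟩⟩
  · rintro ⟨B, -, hB⟩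
    refine ⟨fun t s => ?_, fun t s => ?_⟩
    · rw [hB]; exact comp_shift _ s (hS s)
    · have := congrArg adjoint (comp_shift (adjoint (B t)) s (hS s))
      rw [adjoint_comp, adjoint_comp, comp_adjoint, adjoint_adjoint] at this
      rw [hB]; exact this.symm
  · have h2 : ∀ t s : ℝ≥0, A t ∘L adjoint (S s) = adjoint (S s) ∘L A t := by
      intro t s
      have hn : IsStarNormal (A t) := ⟨(hN t).symm⟩
      have hc : Commute (A t) (S s) := h t s
      have h3 : adjoint (A t) ∘L S s = S s ∘L adjoint (A t) := hn.commute_star_left hc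
      have := congrArg adjoint h3
      rw [adjoint_comp, adjoint_comp, adjoint_adjoint] at this
      exact this.symm
    obtain ⟨B, hB, hAB⟩ := fwd S hS A hA h h2
    refine ⟨B, hB, fun t => ?_, hAB⟩
    apply comp_injective
    rw [comp_comp, comp_comp, ← comp_adjoint, ← hAB]
    exact hN t
  · rintro ⟨B, -, -, hB⟩ t s
    rw [hB]; exact comp_shift _ s (hS s)
end
end

section
/- Let V₁ be a completely nonunitary C₀-semigroup of isometries on a complex Hilbert space H commuting with a unitary C₀-semigroup V₂ on H. Then there exist a Hilbert space F, a unitary C₀-semigroup U = (U_t)_{t≥0} on F, and a unitary Z : H → L²(ℝ₊, F) such that for all t ≥ 0, Z V_{1,t} Z* = S_t^F and (Z V_{2,t} Z* f)(x) = U_t(f(x)) for a.e. x (i.e., Z V_{2,t} Z* = I ⊗ U_t). -/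
open MeasureTheory ContinuousLinearMap
open scoped ENNReal NNReal InnerProductSpace ComplexInnerProductSpace

noncomputable section

section Aux
set_option linter.unusedSectionVars false
variable {H : Type} [NormedAddCommGroup H] [InnerProductSpace ℂ H] [CompleteSpace H]
variable {V : ℝ≥0 → H →L[ℂ] H}

lemma sg_inner (h : IsIsometrySemigroup V) (t : ℝ≥0) (x y : H) : ⟪V t x, V t y⟫_ℂ = ⟪x, y⟫_ℂ :=
  (LinearMap.norm_map_iff_inner_map_map (V t)).1 (h.2 t) x y

lemma sg_add (h : IsIsometrySemigroup V) (s t : ℝ≥0) (x : H) : V (s + t) x = V s (V t x) := by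
  rw [h.1.2.1]; rfl

lemma sg_adj_self (h : IsIsometrySemigroup V) (t : ℝ≥0) (x : H) : adjoint (V t) (V t x) = x := by
  refine ext_inner_left ℂ fun v => ?_
  rw [adjoint_inner_right, sg_inner h]

lemma sg_adj_add (h : IsIsometrySemigroup V) (s t : ℝ≥0) (x : H) :
    adjoint (V (s + t)) x = adjoint (V t) (adjoint (V s) x) := by
  refine ext_inner_left ℂ fun v => ?_
  simp only [adjoint_inner_right, sg_add h]

lemma sg_adj_norm (h : IsIsometrySemigroup V) (t : ℝ≥0) (x : H) : ‖adjoint (V t) x‖ ≤ ‖x‖ := by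
  have h1 : ‖V t‖ ≤ 1 := (V t).opNorm_le_bound zero_le_one (by simp [h.2])
  have h2 : ‖adjoint (V t)‖ ≤ 1 := by simpa using h1
  simpa using (adjoint (V t)).le_of_opNorm_le h2 x

lemma sg_adj_dist_aux (h : IsIsometrySemigroup V) (s r : ℝ≥0) (x : H) :
    dist (adjoint (V (s + r)) x) (adjoint (V s) x) ≤ dist (V (s + r) x) (V s x) := by
  rw [dist_eq_norm, dist_eq_norm, sg_add h, ← map_sub, h.2, add_comm s r, sg_adj_add h, ← map_sub]
  refine (sg_adj_norm h _ _).trans ?_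
  have : adjoint (V r) x - x = adjoint (V r) (x - V r x) := by rw [map_sub, sg_adj_self h]
  rw [this, norm_sub_rev (V r x)]
  exact sg_adj_norm h _ _

lemma sg_adj_dist (h : IsIsometrySemigroup V) (s t : ℝ≥0) (x : H) :
    dist (adjoint (V t) x) (adjoint (V s) x) ≤ dist (V t x) (V s x) := by
  rcases le_total s t with hst | hst
  · obtain ⟨r, rfl⟩ := exists_add_of_le hst
    exact sg_adj_dist_aux h _ _ _
  · obtain ⟨r, rfl⟩ := exists_add_of_le hst
    rw [dist_comm, dist_comm (V t x)]
    exact sg_adj_dist_aux h _ _ _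

lemma sg_adj_cont (h : IsIsometrySemigroup V) (x : H) : Continuous fun t => adjoint (V t) x := by
  rw [continuous_iff_continuousAt]
  intro s
  have := (h.1.2.2 x).continuousAt (x := s)
  rw [ContinuousAt, tendsto_iff_dist_tendsto_zero] at this ⊢
  exact squeeze_zero (fun _ => dist_nonneg) (fun t => sg_adj_dist h s t x) this

/-- two-sided orbit -/
def orb (V : ℝ≥0 → H →L[ℂ] H) (f : H) (u : ℝ) : H :=
  V u.toNNReal f + adjoint (V (-u).toNNReal) f - f

lemma orb_pos (h : IsIsometrySemigroup V) (f : H) {u : ℝ} (hu : 0 ≤ u) :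
    orb V f u = V u.toNNReal f := by
  have : adjoint (1 : H →L[ℂ] H) f = f := by
    refine ext_inner_left ℂ fun v => ?_
    rw [adjoint_inner_right]; simp
  simp [orb, Real.toNNReal_of_nonpos (neg_nonpos.2 hu), h.1.1, this]

lemma orb_neg (h : IsIsometrySemigroup V) (f : H) {u : ℝ} (hu : u ≤ 0) :
    orb V f u = adjoint (V (-u).toNNReal) f := by
  simp [orb, Real.toNNReal_of_nonpos hu, h.1.1]

lemma orb_nn (h : IsIsometrySemigroup V) (f : H) (u : ℝ≥0) : orb V f u = V u f := by
  rw [orb_pos h f (NNReal.coe_nonneg u), Real.toNNReal_coe]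

lemma orb_nn' (h : IsIsometrySemigroup V) (f : H) (u : ℝ≥0) :
    orb V f (-u) = adjoint (V u) f := by
  rw [orb_neg h f (by simp), neg_neg, Real.toNNReal_coe]

lemma orb_zero (h : IsIsometrySemigroup V) (f : H) : orb V f 0 = f := by
  have := orb_nn h f 0
  simpa [h.1.1] using this

lemma orb_cont (h : IsIsometrySemigroup V) (f : H) : Continuous (orb V f) := by
  unfold orb
  have h1 := (h.1.2.2 f).comp continuous_real_toNNReal
  have h2 := (sg_adj_cont h f).comp (continuous_real_toNNReal.comp continuous_neg)
  exact (h1.add h2).sub continuous_const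

lemma orb_norm (h : IsIsometrySemigroup V) (f : H) (u : ℝ) : ‖orb V f u‖ ≤ ‖f‖ := by
  rcases le_total 0 u with hu | hu
  · rw [orb_pos h f hu, h.2]
  · rw [orb_neg h f hu]; exact sg_adj_norm h _ _

lemma exists_nn {u : ℝ} (hu : 0 ≤ u) : ∃ r : ℝ≥0, u = r := ⟨⟨u, hu⟩, rfl⟩

lemma orb_add_pos (h : IsIsometrySemigroup V) (f : H) (s : ℝ≥0) {u : ℝ} (hu : 0 ≤ u) :
    V s (orb V f u) = orb V f (u + s) := by
  obtain ⟨r, rfl⟩ := exists_nn hu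
  rw [orb_nn h, ← NNReal.coe_add, orb_nn h, add_comm, sg_add h]

lemma adj_orb (h : IsIsometrySemigroup V) (f : H) (s : ℝ≥0) (u : ℝ) :
    adjoint (V s) (orb V f u) = orb V f (u - s) := by
  rcases le_total 0 u with hu | hu
  · obtain ⟨r, rfl⟩ := exists_nn hu
    rw [orb_nn h]
    rcases le_total r s with hrs | hrs
    · obtain ⟨q, rfl⟩ := exists_add_of_le hrs
      rw [sg_adj_add h, sg_adj_self h, ← orb_nn' h]
      congr 1; push_cast; ring
    · obtain ⟨q, rfl⟩ := exists_add_of_le hrs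
      rw [sg_add h, sg_adj_self h, ← orb_nn h]
      congr 1; push_cast; ring
  · obtain ⟨r, hr⟩ := exists_nn (neg_nonneg.2 hu)
    obtain rfl : u = -r := by linarith
    rw [orb_nn' h, ← sg_adj_add h, ← orb_nn' h]
    congr 1; push_cast; ring

lemma orb_orb_neg (h : IsIsometrySemigroup V) (f : H) (s : ℝ≥0) {u : ℝ} (hu : u ≤ 0) :
    orb V (adjoint (V s) f) u = orb V f (u - s) := by
  obtain ⟨r, hr⟩ := exists_nn (neg_nonneg.2 hu)
  obtain rfl : u = -r := by linarith
  rw [← adj_orb h, orb_nn' h, orb_nn' h, ← sg_adj_add h, ← sg_adj_add h, add_comm]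

lemma orb_vanish (h : IsIsometrySemigroup V) (f : H) (t : ℝ≥0) (ht : adjoint (V t) f = 0)
    {u : ℝ} (hu : u ≤ -t) : orb V f u = 0 := by
  obtain ⟨r, hr⟩ := exists_nn (u := -t - u) (by linarith)
  obtain rfl : u = -t - r := by linarith
  rw [← adj_orb h, orb_nn' h, ht, map_zero]

lemma exp_int_Ioi {k : ℝ → H} (hk : Continuous k) {C : ℝ} (hC : ∀ u, ‖k u‖ ≤ C) (s : ℝ) :
    IntegrableOn (fun u => Real.exp (-u) • k u) (Set.Ioi s) := by
  have h1 : IntegrableOn (fun u => Real.exp (-u)) (Set.Ioi s) := by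
    simpa using integrableOn_exp_mul_Ioi (a := -1) (by norm_num) s
  refine (h1.mul_const C).mono' ?_ (Filter.Eventually.of_forall fun u => ?_)
  · exact ((Real.continuous_exp.comp continuous_neg).smul hk).aestronglyMeasurable
  · rw [norm_smul, Real.norm_of_nonneg (Real.exp_nonneg _)]
    gcongr
    exact hC u

lemma d_int_Ioi (h : IsIsometrySemigroup V) (f : H) (s : ℝ) :
    IntegrableOn (fun u => Real.exp (-u) • orb V f u) (Set.Ioi s) :=
  exp_int_Ioi (orb_cont h f) (orb_norm h f) s

lemma d_int_Ioi' (h : IsIsometrySemigroup V) (f : H) (r s : ℝ) :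
    IntegrableOn (fun u => Real.exp (-u) • orb V f (u + r)) (Set.Ioi s) :=
  exp_int_Ioi ((orb_cont h f).comp (continuous_add_const r)) (fun _ => orb_norm h f _) s

lemma transl_int (k : ℝ → H) (A : Set ℝ) (s : ℝ) :
    ∫ v in (fun x => x + s) ⁻¹' A, k (v + s) = ∫ u in A, k u :=
  (measurePreserving_add_right volume s).setIntegral_preimage_emb
    (measurableEmbedding_addRight s) k A

lemma d_int (h : IsIsometrySemigroup V) (f : H) (t : ℝ≥0) (ht : adjoint (V t) f = 0) :
    Integrable (fun u => Real.exp (-u) • orb V f u) := by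
  rw [← integrableOn_univ, ← Set.Iic_union_Ioi (a := -(t : ℝ)), integrableOn_union]
  refine ⟨?_, d_int_Ioi h f _⟩
  rw [integrableOn_congr_fun (g := fun _ => 0) _ measurableSet_Iic]
  · exact integrableOn_zero
  · intro u hu
    simp [orb_vanish h f t ht hu]

/-- `G f s = ∫_0^∞ e^{-v} orb f (v+s) dv`. -/
def GG (V : ℝ≥0 → H →L[ℂ] H) (f : H) (s : ℝ) : H :=
  Real.exp s • ∫ u in Set.Ioi s, Real.exp (-u) • orb V f u

lemma GG_eq (V : ℝ≥0 → H →L[ℂ] H) (f : H) (s : ℝ) :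
    GG V f s = ∫ v in Set.Ioi 0, Real.exp (-v) • orb V f (v + s) := by
  rw [GG, ← integral_smul]
  have := transl_int (fun u => Real.exp s • Real.exp (-u) • orb V f u) (Set.Ioi s) s
  rw [show (fun x => x + s) ⁻¹' (Set.Ioi s) = Set.Ioi 0 by ext; simp] at this
  rw [← this]
  refine integral_congr_ae (Filter.Eventually.of_forall fun v => ?_)
  simp only [smul_smul, ← Real.exp_add]
  congr 2; ring

lemma GG_deriv (h : IsIsometrySemigroup V) (f : H) (s : ℝ) :
    HasDerivAt (GG V f) (GG V f s - orb V f s) s := by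
  have hc : Continuous fun u => Real.exp (-u) • orb V f u :=
    ((Real.continuous_exp.comp continuous_neg).smul (orb_cont h f))
  have h1 : ∀ s, ∫ u in Set.Ioi s, Real.exp (-u) • orb V f u
      = (∫ u in Set.Ioi 0, Real.exp (-u) • orb V f u) - ∫ u in (0:ℝ)..s, Real.exp (-u) • orb V f u := by
    intro s
    rw [eq_sub_iff_add_eq, add_comm]
    exact intervalIntegral.integral_interval_add_Ioi (d_int_Ioi h f _) (d_int_Ioi h f _)
  have h2 : HasDerivAt (fun s => ∫ u in Set.Ioi s, Real.exp (-u) • orb V f u)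
      (-(Real.exp (-s) • orb V f s)) s := by
    rw [funext h1]
    have := (hc.integral_hasStrictDerivAt 0 s).hasDerivAt
    simpa using this.const_sub (∫ u in Set.Ioi 0, Real.exp (-u) • orb V f u)
  have h3 := (Real.hasDerivAt_exp s).smul h2
  convert! h3 using 1
  rw [GG, smul_neg, smul_smul, ← Real.exp_add]
  simp; abel

lemma adj_GG (h : IsIsometrySemigroup V) (f : H) (t : ℝ≥0) (s : ℝ) :
    adjoint (V t) (GG V f s) = GG V f (s - t) := by
  rw [GG_eq, GG_eq, ← ContinuousLinearMap.integral_comp_comm _ (d_int_Ioi' h f s 0)]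
  refine integral_congr_ae (Filter.Eventually.of_forall fun v => ?_)
  simp only
  rw [map_smul_of_tower, adj_orb h, add_sub_assoc]

lemma V_GG (h : IsIsometrySemigroup V) (f : H) (t : ℝ≥0) :
    V t (GG V f 0) = GG V f t := by
  rw [GG_eq, GG_eq, ← ContinuousLinearMap.integral_comp_comm _ (d_int_Ioi' h f 0 0)]
  refine setIntegral_congr_fun measurableSet_Ioi fun v hv => ?_
  rw [map_smul_of_tower, add_zero, orb_add_pos h _ _ (le_of_lt hv)]

attribute [local instance] InnerProductSpace.complexToReal

lemma GG_energy (h : IsIsometrySemigroup V) (f : H) :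
    (⟪GG V f 0, GG V f 0 - f⟫_ℂ).re = 0 := by
  have h1 := (GG_deriv h f 1).norm_sq
  have h2 : (fun s => ‖GG V f s‖ ^ 2) =ᶠ[nhds 1] fun _ => ‖GG V f 0‖ ^ 2 := by
    filter_upwards [lt_mem_nhds (zero_lt_one)] with s hs
    obtain ⟨r, rfl⟩ := exists_nn (le_of_lt hs)
    rw [← V_GG h, h.2]
  have h3 := (h1.congr_of_eventuallyEq h2.symm).unique (hasDerivAt_const _ _)
  have e1 : GG V f 1 = V 1 (GG V f 0) := by simpa using (V_GG h f 1).symm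
  have e2 : orb V f 1 = V 1 f := by simpa using orb_nn h f 1
  rw [e1, e2, ← map_sub, real_inner_eq_re_inner ℂ, sg_inner h] at h3
  simpa using h3

/-- The wandering-type space. -/
def Fs (V : ℝ≥0 → H →L[ℂ] H) : Submodule ℂ H where
  carrier := {ξ | ∀ t : ℝ≥0, adjoint (V t) ξ = Real.exp (-t) • ξ}
  add_mem' := by
    intro a b ha hb t
    rw [map_add, ha t, hb t, smul_add]
  zero_mem' := by intro t; simp
  smul_mem' := by
    intro c x hx t
    rw [map_smul, hx t, smul_comm]

lemma Fs_closed : IsClosed (Fs V : Set H) := by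
  have : (Fs V : Set H) = ⋂ t : ℝ≥0, {ξ | adjoint (V t) ξ = Real.exp (-t) • ξ} := by
    ext; simp [Fs]
  rw [this]
  exact isClosed_iInter fun t => isClosed_eq (by fun_prop) (by fun_prop)

/-- complement of the span of the shifted wandering spaces -/
def Ls (V : ℝ≥0 → H →L[ℂ] H) : Submodule ℂ H where
  carrier := {x | ∀ s : ℝ≥0, ∀ ξ ∈ Fs V, ⟪V s ξ, x⟫_ℂ = 0}
  add_mem' := by
    intro a b ha hb s ξ hξ
    rw [inner_add_right, ha s ξ hξ, hb s ξ hξ, add_zero]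
  zero_mem' := by intro s ξ hξ; simp
  smul_mem' := by
    intro c x hx s ξ hξ
    rw [inner_smul_right, hx s ξ hξ, mul_zero]

lemma Ls_closed : IsClosed (Ls V : Set H) := by
  have : (Ls V : Set H) = ⋂ s : ℝ≥0, ⋂ ξ ∈ Fs V, {x | ⟪V s ξ, x⟫_ℂ = 0} := by
    ext; simp [Ls]
  rw [this]
  exact isClosed_iInter fun t => isClosed_biInter fun ξ _ => isClosed_eq (by fun_prop) (by fun_prop)

lemma Ls_adj (h : IsIsometrySemigroup V) (t : ℝ≥0) {x : H} (hx : x ∈ Ls V) :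
    adjoint (V t) x ∈ Ls V := by
  intro s ξ hξ
  rw [adjoint_inner_right, ← sg_add h]
  exact hx _ _ hξ

lemma Ls_V (h : IsIsometrySemigroup V) (t : ℝ≥0) {x : H} (hx : x ∈ Ls V) :
    V t x ∈ Ls V := by
  intro s ξ hξ
  rw [← adjoint_inner_left, ← orb_nn h, adj_orb h]
  rcases le_total 0 ((s : ℝ) - t) with hu | hu
  · rw [orb_pos h _ hu]
    exact hx _ _ hξ
  · rw [orb_neg h _ hu, hξ]
    have := hx 0 ξ hξ
    rw [h.1.1] at this
    rw [← Complex.coe_smul, inner_smul_left]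
    simpa using this

lemma Ls_orb (h : IsIsometrySemigroup V) (u : ℝ) {x : H} (hx : x ∈ Ls V) :
    orb V x u ∈ Ls V := by
  rcases le_total 0 u with hu | hu
  · rw [orb_pos h _ hu]; exact Ls_V h _ hx
  · rw [orb_neg h _ hu]; exact Ls_adj h _ hx

/-- the total integral -/
lemma xi_mem (h : IsIsometrySemigroup V) (f : H) (t : ℝ≥0) (ht : adjoint (V t) f = 0) :
    (∫ u, Real.exp (-u) • orb V f u) ∈ Fs V := by
  intro s
  rw [← ContinuousLinearMap.integral_comp_comm _ (d_int h f t ht), ← integral_smul,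
    ← integral_sub_right_eq_self (fun u => Real.exp (-(s : ℝ)) • Real.exp (-u) • orb V f u) (s : ℝ)]
  refine integral_congr_ae (Filter.Eventually.of_forall fun v => ?_)
  simp only
  rw [map_smul_of_tower, adj_orb h, smul_smul, ← Real.exp_add]
  congr 2; ring

lemma xi_zero (h : IsIsometrySemigroup V) (f : H) (t : ℝ≥0) (ht : adjoint (V t) f = 0)
    (hf : f ∈ Ls V) : (∫ u, Real.exp (-u) • orb V f u) = 0 := by
  have h1 := xi_mem h f t ht
  have key : ∀ ξ ∈ Fs V, ⟪ξ, ∫ u, Real.exp (-u) • orb V f u⟫_ℂ = 0 := by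
    intro ξ hξ
    rw [← integral_inner (d_int h f t ht)]
    rw [← integral_zero ℝ ℂ]
    refine integral_congr_ae (Filter.Eventually.of_forall fun v => ?_)
    simp only
    have := Ls_orb h v hf 0 ξ hξ
    rw [h.1.1] at this
    rw [← Complex.coe_smul, inner_smul_right]
    simpa using this
  exact inner_self_eq_zero.1 (key _ h1)

lemma GG_neg (h : IsIsometrySemigroup V) (f : H) (t : ℝ≥0) (ht : adjoint (V t) f = 0)
    (hf : f ∈ Ls V) (s : ℝ≥0) : GG V f (-s) = GG V (adjoint (V s) f) 0 := by
  have ht' : adjoint (V t) (adjoint (V s) f) = 0 := by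
    rw [← sg_adj_add h, add_comm, sg_adj_add h, ht, map_zero]
  have a1 : ∀ g (r : ℝ), adjoint (V t) g = 0 → g ∈ Ls V →
      GG V g r = - ∫ v in Set.Iic 0, Real.exp (-v) • orb V g (v + r) := by
    intro g r hg hgL
    have i1 := d_int h g t hg
    have := xi_zero h g t hg hgL
    rw [← intervalIntegral.integral_Iic_add_Ioi (b := r) i1.integrableOn i1.integrableOn] at this
    rw [GG, eq_neg_of_add_eq_zero_right this, smul_neg, ← integral_smul]
    have := transl_int (fun u => Real.exp r • Real.exp (-u) • orb V g u) (Set.Iic r) r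
    rw [show (fun x => x + r) ⁻¹' (Set.Iic r) = Set.Iic 0 by ext; simp] at this
    rw [← this]
    congr 1
    refine integral_congr_ae (Filter.Eventually.of_forall fun v => ?_)
    simp only [smul_smul, ← Real.exp_add]
    congr 2; ring
  rw [a1 f _ ht hf, a1 _ _ ht' (Ls_adj h s hf)]
  congr 1
  refine setIntegral_congr_fun measurableSet_Iic fun v hv => ?_
  rw [add_zero, orb_orb_neg h _ _ hv, sub_eq_add_neg]

lemma ker_zero (h : IsIsometrySemigroup V) (f : H) (t : ℝ≥0) (ht : adjoint (V t) f = 0)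
    (hf : f ∈ Ls V) : f = 0 := by
  have hd : ∀ s : ℝ, s ≤ 0 → HasDerivAt (fun s => ‖GG V f s‖ ^ 2) 0 s := by
    intro s hs
    have h1 := (GG_deriv h f s).norm_sq
    obtain ⟨r, hr⟩ := exists_nn (neg_nonneg.2 hs)
    obtain rfl : s = -r := by linarith
    convert h1 using 1
    rw [GG_neg h f t ht hf, orb_nn' h, real_inner_eq_re_inner ℂ]
    have := GG_energy h (adjoint (V r) f)
    simp [this]
  have hconst : ∀ s : ℝ, s ≤ 0 → ‖GG V f s‖ ^ 2 = ‖GG V f 0‖ ^ 2 := by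
    intro s hs
    exact (convex_Iic (0:ℝ)).is_const_of_fderivWithin_eq_zero (𝕜 := ℝ)
      (fun x hx => (hd x hx).differentiableAt.differentiableWithinAt)
      (fun x hx => by
        have := (hd x hx).hasFDerivAt.hasFDerivWithinAt (s := Set.Iic (0:ℝ))
        rw [this.fderivWithin (uniqueDiffOn_Iic 0 x hx)]
        ext; simp) hs (Set.mem_Iic.2 le_rfl)
  have hz : GG V f (-t) = 0 := by
    rw [GG_neg h f t ht hf, ht, GG_eq]
    simp [orb]
  have hall : ∀ s : ℝ, s ≤ 0 → GG V f s = 0 := by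
    intro s hs
    have := (hconst s hs).trans (hconst (-t) (by simp)).symm
    rw [hz] at this
    simpa using this
  have horb : ∀ s : ℝ, s < 0 → orb V f s = 0 := by
    intro s hs
    have h2 : GG V f =ᶠ[nhds s] fun _ => 0 := by
      filter_upwards [gt_mem_nhds hs] with r hr
      exact hall r hr.le
    have h3 := ((GG_deriv h f s).congr_of_eventuallyEq h2.symm).unique (hasDerivAt_const _ _)
    simpa [hall s hs.le] using h3
  have : Set.Iic (0:ℝ) ⊆ {s | orb V f s = 0} := by
    rw [← closure_Iio]
    exact closure_minimal (fun s hs => horb s hs) (isClosed_eq (orb_cont h f) continuous_const)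
  have := this (Set.mem_Iic.2 le_rfl)
  simpa [orb_zero h] using this

lemma Ls_bot (h : IsIsometrySemigroup V) (hcnu : IsCnu V) : Ls V = ⊥ := by
  refine hcnu (Ls V) Ls_closed le_top ⟨fun t x hx => Ls_V h t hx, fun t x hx => Ls_adj h t hx⟩ ?_
  intro t
  refine ⟨fun x hx => Ls_V h t hx, fun x _ => h.2 t x, fun y hy => ?_⟩
  refine ⟨adjoint (V t) y, Ls_adj h t hy, ?_⟩
  have := ker_zero h (y - V t (adjoint (V t) y)) t (by rw [map_sub, sg_adj_self h, sub_self])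
    ((Ls V).sub_mem hy (Ls_V h t (Ls_adj h t hy)))
  exact (sub_eq_zero.1 this).symm

lemma Fs_inner (h : IsIsometrySemigroup V) {ξ η : H} (hξ : ξ ∈ Fs V) (hη : η ∈ Fs V) (s t : ℝ≥0) :
    ⟪V s ξ, V t η⟫_ℂ = Real.exp (-|(s : ℝ) - t|) * ⟪ξ, η⟫_ℂ := by
  rcases le_total s t with hst | hst
  · obtain ⟨r, rfl⟩ := exists_add_of_le hst
    rw [sg_add h, sg_inner h, ← adjoint_inner_left, hξ r, ← Complex.coe_smul, inner_smul_left, Complex.conj_ofReal]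
    simp
  · obtain ⟨r, rfl⟩ := exists_add_of_le hst
    rw [sg_add h, sg_inner h, ← adjoint_inner_right, hη r, ← Complex.coe_smul, inner_smul_right]
    simp

end Aux

section Model
set_option linter.unusedSectionVars false
variable {F : Type} [NormedAddCommGroup F] [InnerProductSpace ℂ F] [CompleteSpace F]

lemma rplus_restrict_s11 (t : ℝ≥0) : rplus.restrict (Set.Ici (t : ℝ)) = volume.restrict (Set.Ici (t : ℝ)) := by
  rw [rplus, Measure.restrict_restrict measurableSet_Ici, Set.Ici_inter_Ici]
  congr 2
  exact max_eq_left t.2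

lemma shift_mp (t : ℝ≥0) :
    MeasurePreserving (fun x : ℝ => x - t) (rplus.restrict (Set.Ici (t : ℝ))) rplus := by
  have := (measurePreserving_sub_right volume (t : ℝ)).restrict_preimage
    (measurableSet_Ici (a := (0 : ℝ)))
  rw [rplus_restrict_s11]
  rw [show (fun x : ℝ => x - t) ⁻¹' Set.Ici 0 = Set.Ici (t : ℝ) by ext; simp] at this
  exact this

/-- shift of functions -/
def shf (t : ℝ≥0) (f : ℝ → F) (x : ℝ) : F := if (t : ℝ) ≤ x then f (x - t) else 0

lemma shf_eq (t : ℝ≥0) (f : ℝ → F) :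
    shf t f = (Set.Ici (t : ℝ)).indicator (f ∘ fun x : ℝ => x - t) := by
  ext x; simp [shf, Set.indicator]

lemma shf_congr (t : ℝ≥0) {f g : ℝ → F} (hfg : f =ᵐ[rplus] g) : shf t f =ᵐ[rplus] shf t g := by
  have := (shift_mp t).quasiMeasurePreserving.ae_eq_comp hfg
  rw [shf_eq, shf_eq]
  exact (ae_eq_restrict_iff_indicator_ae_eq measurableSet_Ici).1 this

lemma shf_norm (t : ℝ≥0) {f : ℝ → F} (hf : AEStronglyMeasurable f rplus) :
    eLpNorm (shf t f) 2 rplus = eLpNorm f 2 rplus := by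
  rw [shf_eq, eLpNorm_indicator_eq_eLpNorm_restrict measurableSet_Ici,
    eLpNorm_comp_measurePreserving hf (shift_mp t)]

lemma shf_memLp (t : ℝ≥0) {f : ℝ → F} (hf : MemLp f 2 rplus) : MemLp (shf t f) 2 rplus := by
  rw [shf_eq, memLp_indicator_iff_restrict measurableSet_Ici]
  exact hf.comp_measurePreserving (shift_mp t)

/-- shift operator -/
def shL (t : ℝ≥0) : Lp F 2 rplus →L[ℂ] Lp F 2 rplus :=
  LinearMap.mkContinuous
    { toFun := fun f => (shf_memLp t (Lp.memLp f)).toLp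
      map_add' := by
        intro f g
        rw [← MemLp.toLp_add, MemLp.toLp_eq_toLp_iff]
        refine (shf_congr t (Lp.coeFn_add f g)).trans (Filter.Eventually.of_forall fun x => ?_)
        simp only [shf, Pi.add_apply]; split_ifs <;> simp
      map_smul' := by
        intro c f
        rw [RingHom.id_apply, ← MemLp.toLp_const_smul, MemLp.toLp_eq_toLp_iff]
        refine (shf_congr t (Lp.coeFn_smul c f)).trans (Filter.Eventually.of_forall fun x => ?_)
        simp only [shf, Pi.smul_apply]; split_ifs <;> simp } 1 (by
    intro f
    rw [one_mul, LinearMap.coe_mk, AddHom.coe_mk, Lp.norm_toLp, shf_norm t (Lp.aestronglyMeasurable f)]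
    rfl)

lemma shL_coe (t : ℝ≥0) (f : Lp F 2 rplus) : (shL t f : ℝ → F) =ᵐ[rplus] shf t f :=
  MemLp.coeFn_toLp (shf_memLp t (Lp.memLp f))

/-- kernel -/
def kf (s : ℝ≥0) : ℝ → ℝ :=
  (Set.Ici (s : ℝ)).indicator fun x => (√2 * Real.exp s) * Real.exp (-x)

lemma kf_meas (s : ℝ≥0) : Measurable (kf s) := by
  unfold kf
  exact Measurable.indicator (by fun_prop) measurableSet_Ici

lemma kf_mul (s t : ℝ≥0) (x : ℝ) : kf s x * kf t x =
    (Set.Ici (max (s : ℝ) t)).indicator (fun x => (2 * Real.exp (s + t)) * Real.exp (-2 * x)) x := by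
  rw [kf, kf, ← Set.inter_indicator_mul, Set.Ici_inter_Ici]
  congr 1
  ext y
  have h2 : √2 * √2 = (2:ℝ) := by norm_num
  rw [Real.exp_add, show -2 * y = -y + -y by ring, Real.exp_add]
  linear_combination (Real.exp s * Real.exp t * Real.exp (-y) * Real.exp (-y)) * h2

lemma kf_int (s t : ℝ≥0) : Integrable (fun x => kf s x * kf t x) rplus := by
  simp_rw [kf_mul]
  rw [integrable_indicator_iff measurableSet_Ici]
  refine Integrable.const_mul ?_ _
  rw [show max (s : ℝ) t = ((max s t : ℝ≥0) : ℝ) by simp, rplus_restrict_s11]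
  exact (integrableOn_Ici_iff_integrableOn_Ioi).2 (integrableOn_exp_mul_Ioi (by norm_num) _)

lemma kf_integral (s t : ℝ≥0) : ∫ x, kf s x * kf t x ∂rplus = Real.exp (-|(s : ℝ) - t|) := by
  simp_rw [kf_mul]
  rw [integral_indicator measurableSet_Ici, integral_const_mul,
    show max (s : ℝ) t = ((max s t : ℝ≥0) : ℝ) by simp, rplus_restrict_s11,
    integral_Ici_eq_integral_Ioi, integral_exp_mul_Ioi (by norm_num)]
  rw [show ((max s t : ℝ≥0) : ℝ) = max (s : ℝ) t by simp]
  rw [show 2 * Real.exp ((s : ℝ) + t) * (-Real.exp (-2 * max (s : ℝ) t) / -2)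
    = Real.exp ((s : ℝ) + t) * Real.exp (-2 * max (s : ℝ) t) by ring, ← Real.exp_add]
  congr 1
  rcases le_total (s : ℝ) t with h | h
  · rw [max_eq_right h, abs_of_nonpos (by linarith)]; ring
  · rw [max_eq_left h, abs_of_nonneg (by linarith)]; ring

lemma kf_memLp (s : ℝ≥0) : MemLp (kf s) 2 rplus := by
  rw [memLp_two_iff_integrable_sq (kf_meas s).aestronglyMeasurable]
  simpa [sq] using kf_int s s

lemma kv_memLp (s : ℝ≥0) (ξ : F) : MemLp (fun x => kf s x • ξ) 2 rplus := by
  have h := (kf_memLp s).ofReal (K := ℂ)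
  have := (ContinuousLinearMap.toSpanSingleton ℂ ξ).comp_memLp' h
  refine this.ae_eq (Filter.Eventually.of_forall fun x => ?_)
  simp

/-- kernel vector -/
def kv (s : ℝ≥0) (ξ : F) : Lp F 2 rplus := (kv_memLp s ξ).toLp

lemma kv_coe (s : ℝ≥0) (ξ : F) : (kv s ξ : ℝ → F) =ᵐ[rplus] fun x => kf s x • ξ :=
  MemLp.coeFn_toLp _

lemma kv_inner (s t : ℝ≥0) (ξ η : F) :
    ⟪kv s ξ, kv t η⟫_ℂ = Real.exp (-|(s : ℝ) - t|) * ⟪ξ, η⟫_ℂ := by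
  rw [L2.inner_def, ← kf_integral, ← integral_complex_ofReal, ← integral_mul_const]
  refine integral_congr_ae ?_
  filter_upwards [kv_coe s ξ, kv_coe t η] with x h1 h2
  rw [h1, h2, ← Complex.coe_smul, ← Complex.coe_smul, inner_smul_left, inner_smul_right,
    Complex.conj_ofReal]
  push_cast; ring

lemma shL_kv (s t : ℝ≥0) (ξ : F) : shL t (kv s ξ) = kv (t + s) ξ := by
  apply Lp.ext
  refine (shL_coe t _).trans ((shf_congr t (kv_coe s ξ)).trans
    (Filter.EventuallyEq.trans (Filter.Eventually.of_forall fun x => ?_) (kv_coe _ ξ).symm))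
  simp only [shf, kf, Set.indicator, Set.mem_Ici, NNReal.coe_add, le_sub_iff_add_le']
  have := s.2
  split_ifs with h1 h2 h2
  · rw [mul_assoc, mul_assoc, ← Real.exp_add, ← Real.exp_add]
    congr 3; ring
  · simp
  · exfalso; apply h1; have := NNReal.coe_nonneg s; linarith
  · simp

lemma ae_zero_of_Ici {g : ℝ → F} (hg : Integrable g rplus)
    (h0 : ∀ s : ℝ≥0, ∫ x in Set.Ici (s : ℝ), g x ∂rplus = 0) : g =ᵐ[rplus] 0 := by
  have htot : ∫ x, g x ∂rplus = 0 := by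
    have := h0 0
    rw [NNReal.coe_zero, rplus, Measure.restrict_restrict measurableSet_Ici, Set.inter_self] at this
    exact this
  have key : ∀ A : Set ℝ, MeasurableSet A → ∫ x in A, g x ∂rplus = 0 := by
    intro A hA
    induction A, hA using MeasurableSpace.induction_on_inter (borel_eq_generateFrom_Ici ℝ ▸
      BorelSpace.measurable_eq (α := ℝ)) isPiSystem_Ici with
    | empty => simp
    | basic t ht =>
      obtain ⟨s, rfl⟩ := ht
      rcases le_total 0 s with hs | hs
      · exact h0 ⟨s, hs⟩
      · rw [← htot, rplus, Measure.restrict_restrict measurableSet_Ici, Set.Ici_inter_Ici,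
          max_eq_right hs]
    | compl t ht ih =>
      have := integral_add_compl ht hg
      rwa [htot, ih, zero_add] at this
    | iUnion f hd hm ih =>
      rw [integral_iUnion hm hd hg.integrableOn]
      simp [ih]
  exact hg.ae_eq_zero_of_forall_setIntegral_eq_zero fun A hA _ => key A hA

lemma kv_total (f : Lp F 2 rplus) (hf : ∀ (s : ℝ≥0) (ξ : F), ⟪kv s ξ, f⟫_ℂ = 0) : f = 0 := by
  have hI : ∀ s : ℝ≥0, Integrable (fun x => kf s x • f x) rplus := by
    intro s
    have := memLp_one_iff_integrable.1 (MemLp.smul (r := 1) (Lp.memLp f) ((kf_memLp s).ofReal (K := ℂ)))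
    exact this.congr (Filter.Eventually.of_forall fun x => by simp)
  have hz : ∀ s : ℝ≥0, ∫ x, kf s x • f x ∂rplus = 0 := by
    intro s
    refine ext_inner_left ℂ fun ξ => ?_
    rw [inner_zero_right, ← integral_inner (hI s), ← hf s ξ, L2.inner_def]
    refine integral_congr_ae ?_
    filter_upwards [kv_coe s ξ] with x h1
    rw [h1, ← Complex.coe_smul, ← Complex.coe_smul, inner_smul_left, inner_smul_right,
      Complex.conj_ofReal]
  have hrp : ∀ᵐ x ∂rplus, 0 ≤ x := ae_restrict_mem measurableSet_Ici
  have h3 := ae_zero_of_Ici (hI 0) (by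
    intro s
    have := hz s
    have e : ∀ x, kf s x • f x = Real.exp s • (Set.Ici (s : ℝ)).indicator (fun x => kf 0 x • f x) x := by
      intro x
      have := NNReal.coe_nonneg s
      by_cases hx : (s : ℝ) ≤ x
      · have h0 : 0 ≤ x := by linarith
        simp [kf, Set.indicator, hx, h0, smul_smul]
        congr 1; ring
      · simp [kf, Set.indicator, hx]
    simp_rw [e] at this
    rw [integral_smul, integral_indicator measurableSet_Ici] at this
    exact (smul_eq_zero.1 this).resolve_left (Real.exp_ne_zero _))
  apply Lp.ext
  filter_upwards [h3, hrp, Lp.coeFn_zero F 2 rplus] with x hx h0 hz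
  rw [hz]
  refine (smul_eq_zero.1 hx).resolve_left ?_
  simp [kf, Set.indicator, h0, Real.exp_ne_zero]

end Model

lemma dense_of_total {ι E : Type} [NormedAddCommGroup E] [InnerProductSpace ℂ E] [CompleteSpace E]
    (a : ι → E) (ha : ∀ x, (∀ i, ⟪a i, x⟫_ℂ = 0) → x = 0) :
    DenseRange (Finsupp.linearCombination ℂ a) := by
  have h1 : (LinearMap.range (Finsupp.linearCombination ℂ a)).topologicalClosure = ⊤ := by
    rw [Submodule.topologicalClosure_eq_top_iff, Submodule.eq_bot_iff]
    intro x hx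
    refine ha x fun i => ?_
    exact (Submodule.mem_orthogonal _ _).1 hx _ ⟨Finsupp.single i 1, by simp⟩
  have := Submodule.dense_iff_topologicalClosure_eq_top.2 h1
  rwa [LinearMap.coe_range] at this

lemma gram_equiv {ι E E' : Type} [NormedAddCommGroup E] [InnerProductSpace ℂ E] [CompleteSpace E]
    [NormedAddCommGroup E'] [InnerProductSpace ℂ E'] [CompleteSpace E']
    (a : ι → E) (b : ι → E') (hab : ∀ i j, ⟪a i, a j⟫_ℂ = ⟪b i, b j⟫_ℂ)
    (ha : ∀ x, (∀ i, ⟪a i, x⟫_ℂ = 0) → x = 0) (hb : ∀ x, (∀ i, ⟪b i, x⟫_ℂ = 0) → x = 0) :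
    ∃ Z : E ≃ₗᵢ[ℂ] E', ∀ i, Z (a i) = b i := by
  have hn : ∀ x : ι →₀ ℂ, ‖Finsupp.linearCombination ℂ b x‖ = ‖Finsupp.linearCombination ℂ a x‖ := by
    intro x
    have : ⟪Finsupp.linearCombination ℂ b x, Finsupp.linearCombination ℂ b x⟫_ℂ
        = ⟪Finsupp.linearCombination ℂ a x, Finsupp.linearCombination ℂ a x⟫_ℂ := by
      simp only [Finsupp.linearCombination_apply, Finsupp.sum_inner, Finsupp.inner_sum,
        inner_smul_left, inner_smul_right, hab]
    rw [@norm_eq_sqrt_re_inner ℂ, @norm_eq_sqrt_re_inner ℂ, this]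
  refine ⟨(LinearEquiv.refl ℂ (ι →₀ ℂ)).extendOfIsometry (Finsupp.linearCombination ℂ a)
    (Finsupp.linearCombination ℂ b) (dense_of_total a ha) (dense_of_total b hb) hn, fun i => ?_⟩
  have := (LinearEquiv.refl ℂ (ι →₀ ℂ)).extendOfIsometry_eq (Finsupp.linearCombination ℂ a)
    (Finsupp.linearCombination ℂ b) (dense_of_total a ha) (dense_of_total b hb) hn (Finsupp.single i 1)
  simpa using this

/-- continuous linear maps agreeing on a total set agree -/
lemma clm_ext_total {ι E E' : Type} [NormedAddCommGroup E] [InnerProductSpace ℂ E] [CompleteSpace E]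
    [NormedAddCommGroup E'] [InnerProductSpace ℂ E']
    (a : ι → E) (ha : ∀ x, (∀ i, ⟪a i, x⟫_ℂ = 0) → x = 0) (S T : E →L[ℂ] E')
    (h : ∀ i, S (a i) = T (a i)) (x : E) : S x = T x := by
  refine congrFun ((dense_of_total a ha).equalizer S.continuous T.continuous ?_) x
  ext l
  simp [Finsupp.linearCombination_apply, Finsupp.sum, map_sum, h]

/-- A completely nonunitary C₀-semigroup of isometries commuting with a unitary
C₀-semigroup is jointly unitarily equivalent to `(S^F ⊗ I, I ⊗ U)` on `L²(ℝ₊, F)`. -/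
theorem cnu_commuting_with_unitary_model {H : Type} [NormedAddCommGroup H]
    [InnerProductSpace ℂ H] [CompleteSpace H] (V1 V2 : ℝ≥0 → H →L[ℂ] H)
    (h1 : IsIsometrySemigroup V1) (hcnu : IsCnu V1)
    (h2 : IsUnitarySemigroup V2) (hc : SgCommute V1 V2) :
    ∃ (F : Type) (_ : NormedAddCommGroup F) (_ : InnerProductSpace ℂ F) (_ : CompleteSpace F)
      (U : ℝ≥0 → F →L[ℂ] F) (Z : H ≃ₗᵢ[ℂ] Lp F 2 rplus),
      IsUnitarySemigroup U ∧
      ∀ (t : ℝ≥0) (x : H),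
        ((Z (V1 t x) : ℝ → F) =ᵐ[rplus]
          fun y => if (t : ℝ) ≤ y then (Z x : ℝ → F) (y - (t : ℝ)) else 0) ∧
        ((Z (V2 t x) : ℝ → F) =ᵐ[rplus] fun y => U t ((Z x : ℝ → F) y)) := by
  have hadj : ∀ (s t : ℝ≥0) (x : H), adjoint (V1 s) (V2 t x) = V2 t (adjoint (V1 s) x) := by
    intro s t x
    have hin : ∀ x y : H, ⟪V2 t x, V2 t y⟫_ℂ = ⟪x, y⟫_ℂ :=
      (LinearMap.norm_map_iff_inner_map_map (V2 t)).1 (h2.2 t).1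
    refine ext_inner_left ℂ fun v => ?_
    obtain ⟨w, rfl⟩ := (h2.2 t).2 v
    have := congrArg (fun T : H →L[ℂ] H => T w) (hc s t)
    simp only [ContinuousLinearMap.comp_apply] at this
    rw [adjoint_inner_right, this, hin, hin, adjoint_inner_right]
  have hinj : ∀ t, Function.Injective (V2 t) := by
    intro t
    exact (AddMonoidHomClass.isometry_of_norm (V2 t) (h2.2 t).1).injective
  have hF : ∀ (t : ℝ≥0), ∀ ξ ∈ Fs V1, V2 t ξ ∈ Fs V1 := by
    intro t ξ hξ s
    rw [hadj, hξ s, map_smul_of_tower]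
  have hF' : ∀ (t : ℝ≥0) (ξ : H), V2 t ξ ∈ Fs V1 → ξ ∈ Fs V1 := by
    intro t ξ hξ s
    apply hinj t
    rw [← hadj, hξ s, map_smul_of_tower]
  have hcomp : CompleteSpace (Fs V1) := (Fs_closed (V := V1)).completeSpace_coe
  let U : ℝ≥0 → Fs V1 →L[ℂ] Fs V1 := fun t =>
    ((V2 t).comp (Fs V1).subtypeL).codRestrict (Fs V1) (fun x => hF t x x.2)
  have hU : ∀ t (ξ : Fs V1), ((U t ξ : Fs V1) : H) = V2 t ξ := fun t ξ => rfl
  let a : ℝ≥0 × Fs V1 → H := fun p => V1 p.1 p.2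
  let b : ℝ≥0 × Fs V1 → Lp (Fs V1) 2 rplus := fun p => kv p.1 p.2
  have ha : ∀ x, (∀ i, ⟪a i, x⟫_ℂ = 0) → x = 0 := by
    intro x hx
    have : x ∈ Ls V1 := fun s ξ hξ => hx (s, ⟨ξ, hξ⟩)
    rw [Ls_bot h1 hcnu] at this
    simpa using this
  have hb : ∀ x, (∀ i, ⟪b i, x⟫_ℂ = 0) → x = 0 := by
    intro x hx
    exact kv_total x fun s ξ => hx (s, ξ)
  have hab : ∀ i j, ⟪a i, a j⟫_ℂ = ⟪b i, b j⟫_ℂ := by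
    intro i j
    rw [Fs_inner h1 i.2.2 j.2.2, kv_inner]
    rfl
  obtain ⟨Z, hZ⟩ := gram_equiv a b hab ha hb
  have hZ' : ∀ s (ξ : Fs V1), Z (V1 s ξ) = kv s ξ := fun s ξ => hZ (s, ξ)
  refine ⟨Fs V1, inferInstance, inferInstance, hcomp, U, Z, ⟨⟨?_, ?_, ?_⟩, ?_⟩, ?_⟩
  · ext ξ; rw [hU, h2.1.1]; rfl
  · intro s t; ext ξ
    rw [hU, h2.1.2.1]; rfl
  · intro ξ
    exact Continuous.subtype_mk (h2.1.2.2 (ξ : H)) _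
  · intro t
    refine ⟨fun ξ => (h2.2 t).1 ξ, fun η => ?_⟩
    obtain ⟨x, hx⟩ := (h2.2 t).2 (η : H)
    exact ⟨⟨x, hF' t x (hx ▸ η.2)⟩, Subtype.ext hx⟩
  · intro t x
    constructor
    · have := clm_ext_total a ha ((Z : H →L[ℂ] Lp (Fs V1) 2 rplus).comp (V1 t))
        ((shL t).comp (Z : H →L[ℂ] Lp (Fs V1) 2 rplus)) (by
          rintro ⟨s, ξ⟩
          change Z (V1 t (V1 s ξ)) = shL t (Z (V1 s ξ))
          rw [← sg_add h1, hZ', hZ', shL_kv]) x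
      change Z (V1 t x) = shL t (Z x) at this
      rw [this]
      exact shL_coe t (Z x)
    · have := clm_ext_total a ha ((Z : H →L[ℂ] Lp (Fs V1) 2 rplus).comp (V2 t))
        (((U t).compLpL 2 rplus).comp (Z : H →L[ℂ] Lp (Fs V1) 2 rplus)) (by
          rintro ⟨s, ξ⟩
          change Z (V2 t (V1 s ξ)) = (U t).compLpL 2 rplus (Z (V1 s ξ))
          have e := congrArg (fun T : H →L[ℂ] H => T ξ) (hc s t)
          simp only [ContinuousLinearMap.comp_apply] at e
          rw [← e, ← hU, hZ', hZ']
          apply Lp.ext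
          refine (kv_coe s (U t ξ)).trans (Filter.EventuallyEq.trans ?_
            ((U t).coeFn_compLpL (kv s ξ)).symm)
          filter_upwards [kv_coe s ξ] with y hy
          rw [hy, map_smul_of_tower]) x
      change Z (V2 t x) = (U t).compLpL 2 rplus (Z x) at this
      rw [this]
      exact (U t).coeFn_compLpL (Z x)
end
end
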